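/- arXiv:2603.23982 — 11 statements merged into one kernel-verified Lean document; each statement's English description precedes it below -/
import Mathlib

section
/- Let S be a right group, let E := E(S) be its set of idempotents, and fix e₀ ∈ E. Then E is a nonempty subsemigroup of S that is a right zero semigroup, the left ideal G := S·e₀ is a group under the induced operation with identity e₀, and the map G × E → S sending (a, e) to a·e is a semigroup isomorphism from the external direct product semigroup G × E (componentwise operation) onto S. -/
/-- Theorem 1.1 (c) ⇒ (d): if `S` is a right group and `e₀` is an idempotent, then the
set `E` of idempotents is a nonempty subsemigroup that is a right zero semigroup, the
left ideal `G = S·e₀` is a group with identity `e₀`, and `(a, e) ↦ a * e` is a semigroup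
isomorphism from the external direct product `G × E` (componentwise operation) onto `S`. -/
theorem stmt_1 (S : Type*) [Semigroup S] [Nonempty S]
    (hrs : ∀ a b : S, ∃ x : S, a * x = b)
    (hlc : ∀ a b c : S, a * b = a * c → b = c)
    (e₀ : S) (he₀ : e₀ * e₀ = e₀) :
    let E : Set S := {a : S | a * a = a}
    let G : Set S := {a : S | ∃ s : S, s * e₀ = a}
    -- E is a nonempty subsemigroup of S which is a right zero semigroup
    E.Nonempty ∧
    (∀ a ∈ E, ∀ b ∈ E, a * b ∈ E ∧ a * b = b) ∧
    -- G = S·e₀ is a left ideal, closed under multiplication, and a group with identity e₀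
    (∀ s : S, ∀ a ∈ G, s * a ∈ G) ∧
    (∀ a ∈ G, ∀ b ∈ G, a * b ∈ G) ∧
    e₀ ∈ G ∧
    (∀ a ∈ G, e₀ * a = a ∧ a * e₀ = a) ∧
    (∀ a ∈ G, ∃ b ∈ G, a * b = e₀ ∧ b * a = e₀) ∧
    -- (a, e) ↦ a * e is a semigroup isomorphism G × E → S (componentwise operation on G × E)
    Function.Bijective (fun p : G × E => (p.1 : S) * (p.2 : S)) ∧
    (∀ a a' : G, ∀ e e' : E,
      ((a : S) * (a' : S)) * ((e : S) * (e' : S)) = ((a : S) * (e : S)) * ((a' : S) * (e' : S))) := by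
  intro E G
  have hl : ∀ e : S, e * e = e → ∀ x, e * x = x := fun e he x =>
    hlc e _ _ (by rw [← mul_assoc, he])
  have hr : ∀ a ∈ G, a * e₀ = a := by
    rintro a ⟨s, rfl⟩
    rw [mul_assoc, he₀]
  have hleft : ∀ s : S, ∀ a ∈ G, s * a ∈ G := by
    rintro s a ⟨t, rfl⟩
    exact ⟨s * t, mul_assoc _ _ _⟩
  refine ⟨⟨e₀, he₀⟩, ?_, hleft, fun a _ b hb => hleft a b hb, ⟨e₀, he₀⟩,
    fun a ha => ⟨hl e₀ he₀ a, hr a ha⟩, ?_, ⟨?_, ?_⟩, ?_⟩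
  · intro a ha b hb
    have h := hl a ha b
    exact ⟨by rw [h]; exact hb, h⟩
  · intro a ha
    obtain ⟨x, hx⟩ := hrs a e₀
    have h1 : a * (x * e₀) = e₀ := by rw [← mul_assoc, hx, he₀]
    refine ⟨x * e₀, ⟨x, rfl⟩, h1, hlc a _ _ ?_⟩
    rw [← mul_assoc, h1, hl e₀ he₀, hr a ha]
  · rintro ⟨⟨a, ha⟩, ⟨e, he⟩⟩ ⟨⟨a', ha'⟩, ⟨e', he'⟩⟩ h
    replace h : a * e = a' * e' := h
    have h2 : a = a' := by
      have h3 := congrArg (· * e₀) h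
      simp only [mul_assoc] at h3
      rwa [hl e he, hl e' he', hr a ha, hr a' ha'] at h3
    subst h2
    have h4 := hlc _ _ _ h
    subst h4
    rfl
  · intro s
    obtain ⟨e, he⟩ := hrs s s
    have hee : e * e = e := hlc s _ _ (by rw [← mul_assoc, he, he])
    refine ⟨⟨⟨s * e₀, ⟨s, rfl⟩⟩, ⟨e, hee⟩⟩, ?_⟩
    change s * e₀ * e = s
    rw [mul_assoc, hl e₀ he₀, he]
  · rintro ⟨a, ha⟩ ⟨a', ha'⟩ ⟨e, he⟩ ⟨e', he'⟩
    change a * a' * (e * e') = a * e * (a' * e')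
    rw [hl e he, mul_assoc a e, hl e he, mul_assoc]
end

section
/- Let S be a right group. For every s ∈ S there exists a unique idempotent f ∈ E(S) such that s·f = s; denoting this element π_E(s), the resulting map π_E: S → E(S) is a surjective semigroup morphism from S onto the right zero semigroup E(S). -/
/-- The projection `π_E`: in a right group `S`, for every `s` there is a unique
idempotent `f` with `s·f = s`; the resulting map `π_E : S → E(S)` is a surjective
semigroup morphism onto the right zero semigroup `E(S)`. -/
theorem stmt_5 (S : Type*) [Semigroup S] [Nonempty S]
    (hrs : ∀ a b : S, ∃ x : S, a * x = b)
    (hlc : ∀ a b c : S, a * b = a * c → b = c) :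
    (∀ s : S, ∃! f : S, f * f = f ∧ s * f = s) ∧
    ∀ πE : S → S, (∀ s : S, πE s * πE s = πE s ∧ s * πE s = s) →
      -- πE is a semigroup morphism
      (∀ s t : S, πE (s * t) = πE s * πE t) ∧
      -- its image lies in the right zero semigroup E(S)
      (∀ s t : S, πE s * πE t = πE t) ∧
      -- πE is surjective onto E(S)
      (∀ e : S, e * e = e → ∃ s : S, πE s = e) := by
  have left_id : ∀ e : S, e * e = e → ∀ x : S, e * x = x := fun e he x =>
    hlc e _ _ (by rw [← mul_assoc, he])
  refine ⟨fun s => ?_, fun πE h => ?_⟩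
  · obtain ⟨f, hf⟩ := hrs s s
    refine ⟨f, ⟨hlc s _ _ (by rw [← mul_assoc, hf, hf]), hf⟩, ?_⟩
    rintro g ⟨_, hg⟩
    exact hlc s _ _ (hg.trans hf.symm)
  · have rz : ∀ s t : S, πE s * πE t = πE t := fun s t => left_id _ (h s).1 _
    refine ⟨fun s t => ?_, rz, fun e he => ⟨e, hlc e _ _ ((h e).2.trans he.symm)⟩⟩
    rw [rz]
    exact hlc (s * t) _ _ (by rw [(h (s * t)).2, mul_assoc, (h t).2])
end

section
/- Let S be a right group, e ∈ E(S), r_e: S → Se the map r_e(s) = s·e, and π_E: S → E(S) the map sending s to the unique idempotent f with s·f = s. Then (S, r_e, π_E) is a product of Se and E(S) in the category of semigroups: for every semigroup T and all semigroup morphisms f_e: T → Se and f_E: T → E(S), there exists a unique semigroup morphism f: T → S such that r_e ∘ f = f_e and π_E ∘ f = f_E. -/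
/-- Proposition (1): for a right group `S` and an idempotent `e`, `(S, r_e, π_E)` is the
product of `Se` and `E(S)` in the category of semigroups: for every semigroup `T` and
semigroup morphisms `f_e : T → Se ⊆ S` and `f_E : T → E(S) ⊆ S`, there is a unique
semigroup morphism `f : T → S` with `r_e ∘ f = f_e` (i.e. `f t * e = f_e t`) and
`π_E ∘ f = f_E` (i.e. `f_E t` is the unique idempotent fixing `f t` on the right). -/
theorem stmt_7 (S : Type*) [Semigroup S] [Nonempty S]
    (hrs : ∀ a b : S, ∃ x : S, a * x = b)
    (hlc : ∀ a b c : S, a * b = a * c → b = c)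
    (e : S) (he : e * e = e)
    (T : Type*) [Semigroup T]
    (fe : T →ₙ* S) (hfe : ∀ t : T, ∃ s : S, s * e = fe t)
    (fE : T →ₙ* S) (hfE : ∀ t : T, fE t * fE t = fE t) :
    ∃! f : T →ₙ* S, (∀ t : T, f t * e = fe t) ∧ (∀ t : T, f t * fE t = f t) := by
  have hid : ∀ i : S, i * i = i → ∀ x : S, i * x = x := fun i hi x =>
    hlc i _ _ (by rw [← mul_assoc, hi])
  have hL : ∀ (t : T) (x : S), fE t * x = x := fun t => hid _ (hfE t)
  have hfee : ∀ t : T, fe t * e = fe t := by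
    intro t
    obtain ⟨s, hs⟩ := hfe t
    rw [← hs, mul_assoc, he]
  refine ⟨⟨fun t => fe t * fE t, ?_⟩, ⟨?_, ?_⟩, ?_⟩
  · intro a b
    simp only [map_mul, mul_assoc, hL]
  · intro t
    change fe t * fE t * e = fe t
    rw [mul_assoc, hL, hfee]
  · intro t
    change fe t * fE t * fE t = fe t * fE t
    rw [mul_assoc, hL]
  · rintro g ⟨h1, h2⟩
    ext t
    change g t = fe t * fE t
    rw [← h1, mul_assoc, hid e he, h2]
end

section
/- Let S be a right group, e ∈ E(S), E := E(S), and let ι_e: Se → S and ι_E: E → S be the inclusions. Then ((S, e), ι_e, ι_E) is the coproduct of (Se, e) and (E, e) in the category of pointed right groups: for every right group T with a chosen idempotent e_T ∈ E(T) and all semigroup morphisms f_e: Se → T and f_E: E → T with f_e(e) = e_T and f_E(e) = e_T, there exists a unique semigroup morphism ψ: S → T such that ψ ∘ ι_e = f_e and ψ ∘ ι_E = f_E. -/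
/-- Proposition (2): for a right group `S` and an idempotent `e`, `((S, e), ι_e, ι_E)`
is the coproduct of `(Se, e)` and `(E(S), e)` in the category of pointed right groups:
for every right group `T` with chosen idempotent `e_T`, and all semigroup morphisms
`f_e : Se → T`, `f_E : E(S) → T` sending `e` to `e_T`, there is a unique semigroup
morphism `ψ : S → T` restricting to `f_e` on `Se` and to `f_E` on `E(S)`. -/
theorem stmt_8 (S : Type*) [Semigroup S] [Nonempty S]
    (hrs : ∀ a b : S, ∃ x : S, a * x = b)
    (hlc : ∀ a b c : S, a * b = a * c → b = c)
    (e : S) (he : e * e = e)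
    (T : Type*) [Semigroup T] (hneT : Nonempty T)
    (hrsT : ∀ a b : T, ∃ x : T, a * x = b)
    (hlcT : ∀ a b c : T, a * b = a * c → b = c)
    (eT : T) (heT : eT * eT = eT)
    (fe : S → T)
    (hfe_mul : ∀ x y : S, (∃ s : S, s * e = x) → (∃ s : S, s * e = y) →
      fe (x * y) = fe x * fe y)
    (hfe_e : fe e = eT)
    (fE : S → T)
    (hfE_mul : ∀ x y : S, x * x = x → y * y = y → fE (x * y) = fE x * fE y)
    (hfE_e : fE e = eT) :
    ∃! ψ : S →ₙ* T,
      (∀ x : S, (∃ s : S, s * e = x) → ψ x = fe x) ∧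
      (∀ x : S, x * x = x → ψ x = fE x) := by
  have lid : ∀ a : S, a * a = a → ∀ x, a * x = x := fun a ha x =>
    hlc a _ _ (by rw [← mul_assoc, ha])
  have lidT : ∀ a : T, a * a = a → ∀ x, a * x = x := fun a ha x =>
    hlcT a _ _ (by rw [← mul_assoc, ha])
  choose r hr using fun x : S => hrs x x
  have hru : ∀ x y, x * y = x → r x = y := fun x y h => hlc x _ _ (by rw [hr, h])
  have hri : ∀ x, r x * r x = r x := fun x => hlc x _ _ (by rw [← mul_assoc, hr, hr])
  have hfi : ∀ x, x * x = x → fE x * fE x = fE x := fun x hx => by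
    rw [← hfE_mul x x hx hx, hx]
  have hdec : ∀ x, x * e * r x = x := fun x => by rw [mul_assoc, lid e he, hr]
  refine ⟨⟨fun x => fe (x * e) * fE (r x), ?_⟩, ⟨?_, ?_⟩, ?_⟩
  · intro x y
    have h1 : r (x * y) = r y := hru _ _ (by rw [mul_assoc, hr])
    have h2 : x * y * e = (x * e) * (y * e) := by
      rw [mul_assoc x e, lid e he, mul_assoc]
    rw [h1, h2, hfe_mul _ _ ⟨x, rfl⟩ ⟨y, rfl⟩, mul_assoc, mul_assoc,
      lidT _ (hfi _ (hri x))]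
  · rintro x ⟨s, rfl⟩
    have h1 : s * e * e = s * e := by rw [mul_assoc, he]
    change fe (s * e * e) * fE (r (s * e)) = _
    rw [hru _ _ h1, hfE_e, ← hfe_e, h1, ← hfe_mul _ _ ⟨s, rfl⟩ ⟨e, he⟩, h1]
  · intro x hx
    change fe (x * e) * fE (r x) = _
    rw [hru _ _ hx, lid x hx, hfe_e, lidT _ heT]
  · rintro φ ⟨h1, h2⟩
    ext x
    change φ x = fe (x * e) * fE (r x)
    rw [← h1 _ ⟨x, rfl⟩, ← h2 _ (hri x), ← map_mul, hdec]
end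

section
/- Let S be a right group, e ∈ E(S), E := E(S), and let ι_e: Se → S and ι_E: E → S be the inclusions. Then (S, ι_e, ι_E) is not a coproduct of Se and E in the category of semigroups: there exist a semigroup T and semigroup morphisms f_e: Se → T and f_E: E → T such that no semigroup morphism ω: S → T satisfies ω ∘ ι_e = f_e and ω ∘ ι_E = f_E. -/
/-- Proposition (3): for a right group `S` and an idempotent `e`, `(S, ι_e, ι_E)` is not
a coproduct of `Se` and `E(S)` in the category of semigroups: there exist a semigroup `T`
and semigroup morphisms `f_e : Se → T`, `f_E : E(S) → T` that admit no common extension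
to a semigroup morphism `ω : S → T`. -/
theorem stmt_9 (S : Type*) [Semigroup S] [Nonempty S]
    (hrs : ∀ a b : S, ∃ x : S, a * x = b)
    (hlc : ∀ a b c : S, a * b = a * c → b = c)
    (e : S) (he : e * e = e) :
    ∃ (T : Type) (_ : Semigroup T) (fe fE : S → T),
      (∀ x y : S, (∃ s : S, s * e = x) → (∃ s : S, s * e = y) →
        fe (x * y) = fe x * fe y) ∧
      (∀ x y : S, x * x = x → y * y = y → fE (x * y) = fE x * fE y) ∧
      ∀ ω : S →ₙ* T,
        ¬ ((∀ x : S, (∃ s : S, s * e = x) → ω x = fe x) ∧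
           (∀ x : S, x * x = x → ω x = fE x)) := by
  refine ⟨ℕ, inferInstance, fun _ => 0, fun _ => 1, ?_, ?_, ?_⟩
  · intro x y _ _
    rfl
  · intro x y _ _
    rfl
  · rintro ω ⟨h1, h2⟩
    have h3 := h1 e ⟨e, he⟩
    have h4 := h2 e he
    exact zero_ne_one (h3.symm.trans h4)
end

section
/- Let S, S' be right groups, E := E(S), E' := E(S'). For i = 1, 2, let ε_i: E → E' be a map, e_i ∈ E, and ψ_i: Se_i → S'ε_i(e_i) a group morphism, and let φ_i: S → S' be the semigroup morphism defined by φ_i(s) = ψ_i(s·e_i)·ε_i(π_E(s)). Then φ₁ = φ₂ if and only if ε₁ = ε₂ and r_{ε₂(e₂)} ∘ ψ₁ = ψ₂ ∘ r_{e₂}, where r_{e₂}: Se₁ → Se₂ is right multiplication by e₂ and r_{ε₂(e₂)}: S'ε₁(e₁) → S'ε₂(e₂) is right multiplication by ε₂(e₂). -/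
/-- Proposition 3.4 (c): for right groups `S, S'`, two triplets `(ε₁, e₁, ψ₁)` and
`(ε₂, e₂, ψ₂)` correspond to the same semigroup morphism `φᵢ(s) = ψᵢ(s·eᵢ)·εᵢ(π_E(s))`
if and only if `ε₁ = ε₂` and `r_{ε₂(e₂)} ∘ ψ₁ = ψ₂ ∘ r_{e₂}`.
Here `Seᵢ` is identified with `{x | x·eᵢ = x}`. -/
theorem stmt_11 (S S' : Type*) [Semigroup S] [Semigroup S']
    (hne : Nonempty S) (hrs : ∀ a b : S, ∃ x : S, a * x = b)
    (hlc : ∀ a b c : S, a * b = a * c → b = c)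
    (hne' : Nonempty S') (hrs' : ∀ a b : S', ∃ x : S', a * x = b)
    (hlc' : ∀ a b c : S', a * b = a * c → b = c)
    (ε₁ ε₂ : {x : S // x * x = x} → {y : S' // y * y = y})
    (e₁ e₂ : {x : S // x * x = x})
    (ψ₁ : {x : S // x * e₁.1 = x} → S') (ψ₂ : {x : S // x * e₂.1 = x} → S')
    -- the ψᵢ are group morphisms Seᵢ → S'·εᵢ(eᵢ)
    (hψ₁mul : ∀ x y : {x : S // x * e₁.1 = x},
      ψ₁ ⟨x.1 * y.1, by rw [mul_assoc, y.2]⟩ = ψ₁ x * ψ₁ y)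
    (hψ₁into : ∀ x : {x : S // x * e₁.1 = x}, ψ₁ x * (ε₁ e₁ : S') = ψ₁ x)
    (hψ₂mul : ∀ x y : {x : S // x * e₂.1 = x},
      ψ₂ ⟨x.1 * y.1, by rw [mul_assoc, y.2]⟩ = ψ₂ x * ψ₂ y)
    (hψ₂into : ∀ x : {x : S // x * e₂.1 = x}, ψ₂ x * (ε₂ e₂ : S') = ψ₂ x)
    -- φᵢ is the semigroup morphism determined by the triplet (εᵢ, eᵢ, ψᵢ)
    (φ₁ φ₂ : S → S')
    (hφ₁ : ∀ (s f : S) (hf : f * f = f), s * f = s →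
      φ₁ s = ψ₁ ⟨s * e₁.1, by rw [mul_assoc, e₁.2]⟩ * (ε₁ ⟨f, hf⟩ : S'))
    (hφ₂ : ∀ (s f : S) (hf : f * f = f), s * f = s →
      φ₂ s = ψ₂ ⟨s * e₂.1, by rw [mul_assoc, e₂.2]⟩ * (ε₂ ⟨f, hf⟩ : S')) :
    φ₁ = φ₂ ↔
      (ε₁ = ε₂ ∧
        ∀ x : {x : S // x * e₁.1 = x},
          ψ₁ x * (ε₂ e₂ : S') = ψ₂ ⟨x.1 * e₂.1, by rw [mul_assoc, e₂.2]⟩) := by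
  have hid : ∀ f b : S, f * f = f → f * b = b := fun f b hf =>
    hlc f _ _ (by rw [← mul_assoc, hf])
  have hid' : ∀ f b : S', f * f = f → f * b = b := fun f b hf =>
    hlc' f _ _ (by rw [← mul_assoc, hf])
  have h1 : ∀ f : {x : S // x * x = x}, φ₁ f.1 = ε₁ f := by
    intro f
    rw [hφ₁ f.1 f.1 f.2 f.2]
    apply hid'
    rw [← hψ₁mul]
    congr 1
    apply Subtype.ext
    simp only [hid f.1 _ f.2, e₁.2]
  have h2 : ∀ f : {x : S // x * x = x}, φ₂ f.1 = ε₂ f := by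
    intro f
    rw [hφ₂ f.1 f.1 f.2 f.2]
    apply hid'
    rw [← hψ₂mul]
    congr 1
    apply Subtype.ext
    simp only [hid f.1 _ f.2, e₂.2]
  constructor
  · intro h
    have hε : ε₁ = ε₂ := by
      funext f
      apply Subtype.ext
      rw [← h1, ← h2, h]
    refine ⟨hε, fun x => ?_⟩
    have hx : x.1 * e₂.1 * e₂.1 = x.1 * e₂.1 := by rw [mul_assoc, e₂.2]
    have ha := hφ₁ (x.1 * e₂.1) e₂.1 e₂.2 hx
    have hb := hφ₂ (x.1 * e₂.1) e₂.1 e₂.2 hx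
    have hc : x.1 * e₂.1 * e₁.1 = x.1 := by rw [mul_assoc, hid e₂.1 _ e₂.2, x.2]
    rw [h, hb, hψ₂into, hε] at ha
    simp only [hx, hc] at ha
    exact ha.symm
  · rintro ⟨hε, h⟩
    funext s
    obtain ⟨f, hs⟩ := hrs s s
    have hf : f * f = f := hlc s _ _ (by rw [← mul_assoc, hs, hs])
    rw [hφ₁ s f hf hs, hφ₂ s f hf hs, hε]
    have hx := h ⟨s * e₁.1, by rw [mul_assoc, e₁.2]⟩
    have hc : s * e₁.1 * e₂.1 = s * e₂.1 := by rw [mul_assoc, hid e₁.1 _ e₁.2]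
    simp only [hc] at hx
    rw [← hx, mul_assoc (ψ₁ _), hid' (ε₂ e₂).1 _ (ε₂ e₂).2]
end

section
/- Let S be a right group with congruence ∼ and canonical projection π: S → S/∼. For each e₀ ∈ E(S), right multiplication by e₀ induces a semigroup morphism r̄_{e₀}: S/∼ → S (sending the class xE(S) to x·e₀) satisfying π ∘ r̄_{e₀} = id. The assignment e₀ ↦ r̄_{e₀} is a bijection from E(S) onto the set of all semigroup morphisms φ: S/∼ → S with π ∘ φ = id_{S/∼}. -/
/-- Proposition on right inverses of the canonical projection: let `S` be a right group
and `π : S → Q` a realization of the canonical projection `S → S/∼` (a surjective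
semigroup morphism whose kernel is the congruence `∼`). For each idempotent `e₀`, right
multiplication by `e₀` induces a semigroup morphism `r̄_{e₀} : Q → S` (sending the class
of `x` to `x·e₀`) which is a right inverse of `π`, and `e₀ ↦ r̄_{e₀}` is a bijection
from `E(S)` onto the set of semigroup morphisms `φ : Q → S` with `π ∘ φ = id`. -/
theorem stmt_12 (S : Type*) [Semigroup S] [Nonempty S]
    (hrs : ∀ a b : S, ∃ x : S, a * x = b)
    (hlc : ∀ a b c : S, a * b = a * c → b = c)
    (Q : Type*) [Semigroup Q] (π : S →ₙ* Q)
    (hsurj : Function.Surjective π)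
    (hker : ∀ x y : S, π x = π y ↔ ∃ e : S, e * e = e ∧ x * e = y * e) :
    -- each idempotent e₀ yields a right inverse r̄_{e₀} of π, induced by r_{e₀}
    (∀ e₀ : S, e₀ * e₀ = e₀ →
      ∃ φ : Q →ₙ* S, (∀ x : S, φ (π x) = x * e₀) ∧ ∀ q : Q, π (φ q) = q) ∧
    -- and every right inverse of π arises in this way from exactly one idempotent
    (∀ φ : Q →ₙ* S, (∀ q : Q, π (φ q) = q) →
      ∃! e₀ : S, e₀ * e₀ = e₀ ∧ ∀ x : S, φ (π x) = x * e₀) := by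
  have hid : ∀ e x : S, e * e = e → e * x = x := fun e x he =>
    hlc e _ _ (by rw [← mul_assoc, he])
  have hmul : ∀ x y e₀ : S, π x = π y → x * e₀ = y * e₀ := by
    intro x y e₀ h
    obtain ⟨e, he, hxy⟩ := (hker x y).1 h
    rw [← hid e e₀ he, ← mul_assoc, hxy, mul_assoc]
  have hpi : ∀ x e : S, e * e = e → π (x * e) = π x := fun x e he =>
    (hker _ _).2 ⟨e, he, by rw [mul_assoc, he]⟩
  refine ⟨?_, ?_⟩
  · intro e₀ he
    have key : ∀ x : S, Function.surjInv hsurj (π x) * e₀ = x * e₀ := fun x =>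
      hmul _ _ _ (Function.surjInv_eq hsurj (π x))
    refine ⟨⟨fun q => Function.surjInv hsurj q * e₀, ?_⟩, key, ?_⟩
    · intro p q
      obtain ⟨x, rfl⟩ := hsurj p
      obtain ⟨y, rfl⟩ := hsurj q
      rw [← map_mul, key, key, key, mul_assoc x e₀, hid e₀ _ he, mul_assoc]
    · intro q
      exact (hpi _ _ he).trans (Function.surjInv_eq hsurj q)
  · intro φ hφ
    obtain ⟨a⟩ := ‹Nonempty S›
    obtain ⟨e, hae⟩ := hrs a a
    have he : e * e = e := hlc a _ _ (by rw [← mul_assoc, hae, hae])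
    refine ⟨φ (π e), ⟨by rw [← map_mul, ← map_mul, he], ?_⟩, ?_⟩
    · intro x
      rw [← hmul _ _ (φ (π e)) (hφ (π x)), ← map_mul, ← map_mul, hpi x e he]
    · rintro f ⟨hf, h⟩
      rw [h e, hid e f he]
end

section
/- Let S be a right group and e, f ∈ E(S). Then there exists a semigroup automorphism α of S with α(e) = f; that is, the pointed right groups (S, e) and (S, f) are isomorphic. -/
/-- For a right group `S` and idempotents `e, f ∈ E(S)`, there is a semigroup
automorphism `α` of `S` with `α(e) = f`; that is, the pointed right groups `(S, e)` and
`(S, f)` are isomorphic. -/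
theorem stmt_13 (S : Type*) [Semigroup S] [Nonempty S]
    (hrs : ∀ a b : S, ∃ x : S, a * x = b)
    (hlc : ∀ a b c : S, a * b = a * c → b = c)
    (e f : S) (he : e * e = e) (hf : f * f = f) :
    ∃ α : S ≃* S, α e = f := by
  classical
  have lid : ∀ g : S, g * g = g → ∀ x, g * x = x := by
    intro g hg x
    apply hlc g
    rw [← mul_assoc, hg]
  choose r hr using fun x : S => hrs x x
  have runiq : ∀ x g : S, x * g = x → r x = g := by
    intro x g h
    apply hlc x
    rw [hr, h]
  have rid : ∀ x, r x * r x = r x := by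
    intro x
    apply hlc x
    rw [← mul_assoc, hr, hr]
  have sid : ∀ g : S, g * g = g → Equiv.swap e f g * Equiv.swap e f g = Equiv.swap e f g := by
    intro g hg
    rw [Equiv.swap_apply_def]
    split_ifs
    · exact hf
    · exact he
    · exact hg
  have rmul : ∀ x g : S, g * g = g → r (x * g) = g := by
    intro x g hg
    apply runiq
    rw [mul_assoc, hg]
  have rmul' : ∀ x y : S, r (x * y) = r y := by
    intro x y
    apply runiq
    rw [mul_assoc, hr]
  have inv : ∀ x : S, (x * Equiv.swap e f (r x)) *
      Equiv.swap e f (r (x * Equiv.swap e f (r x))) = x := by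
    intro x
    rw [rmul x _ (sid _ (rid x)), Equiv.swap_apply_self, mul_assoc, lid _ (sid _ (rid x)), hr]
  refine ⟨⟨⟨fun x => x * Equiv.swap e f (r x), fun x => x * Equiv.swap e f (r x), inv, inv⟩, ?_⟩, ?_⟩
  · intro x y
    change (x * y) * Equiv.swap e f (r (x * y)) =
      (x * Equiv.swap e f (r x)) * (y * Equiv.swap e f (r y))
    rw [rmul', mul_assoc, mul_assoc, lid _ (sid _ (rid x))]
  · change e * Equiv.swap e f (r e) = f
    rw [runiq e e he, Equiv.swap_apply_left, lid e he]
end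

section
/- Let G be a group, X a nonempty set, and φ: G → Sym(X) a group homomorphism. Let (X×G)_φ denote X × G with the operation (x, g)·(x', g') = (φ_g(x'), g·g'), and let (X×G)_𝟙 denote X × G with the operation (x, g)·(x', g') = (x', g·g'). Then the map η: (X×G)_𝟙 → (X×G)_φ defined by η(x, g) = (φ_g(x), g) is a semigroup isomorphism. -/
/-- Proposition: for a group `G`, a nonempty set `X` and a group homomorphism
`φ : G → Sym(X)`, the map `η(x, g) = (φ_g(x), g)` is a semigroup isomorphism from
`(X×G)_𝟙` (operation `(x,g)·(x',g') = (x', g·g')`) onto `(X×G)_φ` (operation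
`(x,g)·(x',g') = (φ_g(x'), g·g')`). -/
theorem stmt_16 (G : Type*) [Group G] (X : Type*) [Nonempty X]
    (φ : G →* Equiv.Perm X) :
    let mulφ : X × G → X × G → X × G := fun p q => (φ p.2 q.1, p.2 * q.2)
    let mul1 : X × G → X × G → X × G := fun p q => (q.1, p.2 * q.2)
    let η : X × G → X × G := fun p => (φ p.2 p.1, p.2)
    Function.Bijective η ∧ ∀ p q : X × G, η (mul1 p q) = mulφ (η p) (η q) := by
  intro mulφ mul1 η
  refine ⟨⟨?_, ?_⟩, ?_⟩
  · rintro ⟨x, g⟩ ⟨y, h⟩ hxy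
    obtain ⟨h1, h2⟩ := Prod.mk.inj hxy
    dsimp only at h1 h2
    subst h2
    rw [(φ g).injective h1]
  · rintro ⟨x, g⟩
    exact ⟨((φ g).symm x, g), by simp [η]⟩
  · rintro ⟨x, g⟩ ⟨y, h⟩
    simp [η, mul1, mulφ, map_mul, Equiv.Perm.mul_apply]
end

section
/- Let f: S → S' be a semigroup morphism between right groups and E := E(S). Call a semigroup morphism between right groups trivial if its image is a singleton (consisting of an idempotent). Then f has a Z-prekernel in the category of right groups — i.e., there exist a right group L and a semigroup morphism j: L → S such that f ∘ j is trivial and, for every right group Y and every semigroup morphism λ: Y → S with f ∘ λ trivial, there is a unique semigroup morphism λ': Y → L with λ = j ∘ λ' — if and only if f(E) is a singleton. Moreover, if f(E) = {g₀}, then K := f⁻¹({g₀}) is a subsemigroup of S that is itself a right group, and the inclusion K → S is a Z-prekernel of f. -/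
/-- A nonempty, right simple, left cancellative semigroup, i.e., a right group. -/
def IsRightGroup (S : Type*) [Semigroup S] : Prop :=
  Nonempty S ∧ (∀ a b : S, ∃ x : S, a * x = b) ∧ ∀ a b c : S, a * b = a * c → b = c

/-- A semigroup morphism between right groups is trivial if its image is a singleton
(consisting of an idempotent). -/
def IsTrivialHom {S T : Type*} [Semigroup S] [Semigroup T] (f : S →ₙ* T) : Prop :=
  ∃ t : T, t * t = t ∧ ∀ s : S, f s = t

/-- `j : L → S` is a Z-prekernel of `f : S → S'` in the category of right groups:
`f ∘ j` is trivial, and every morphism `λ : Y → S` from a right group `Y` with `f ∘ λ`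
trivial factors uniquely through `j`. -/
def IsZPrekernel {L S S' : Type} [Semigroup L] [Semigroup S] [Semigroup S']
    (f : S →ₙ* S') (j : L →ₙ* S) : Prop :=
  IsTrivialHom (f.comp j) ∧
    ∀ (Y : Type) [Semigroup Y], IsRightGroup Y → ∀ lam : Y →ₙ* S,
      IsTrivialHom (f.comp lam) → ∃! lam' : Y →ₙ* L, lam = j.comp lam'

theorem IsRightGroup.exists_idem {S : Type*} [Semigroup S] (h : IsRightGroup S) :
    ∃ e : S, e * e = e := by
  obtain ⟨⟨a⟩, hr, hc⟩ := h
  obtain ⟨x, hx⟩ := hr a a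
  refine ⟨x, hc a _ _ ?_⟩
  rw [← mul_assoc, hx, hx]

theorem IsRightGroup.idem_mul {S : Type*} [Semigroup S] (h : IsRightGroup S) {e : S}
    (he : e * e = e) (b : S) : e * b = b :=
  h.2.2 e _ _ (by rw [← mul_assoc, he])

theorem prekernel_aux {S S' : Type} [Semigroup S] [Semigroup S']
    (hS : IsRightGroup S) (hS' : IsRightGroup S') (f : S →ₙ* S')
    (g₀ : S') (hg : ∀ e : S, e * e = e → f e = g₀) :
      ∃ K : Subsemigroup S, (K : Set S) = {s : S | f s = g₀} ∧
        IsRightGroup K ∧ IsZPrekernel f (MulMemClass.subtype K) := by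
  obtain ⟨e, he⟩ := hS.exists_idem
  have hgg : g₀ * g₀ = g₀ := by rw [← hg e he, ← map_mul, he]
  let K : Subsemigroup S :=
    { carrier := {s : S | f s = g₀}
      mul_mem' := by
        intro a b ha hb
        simp only [Set.mem_ofPred_eq] at ha hb ⊢
        rw [map_mul, ha, hb, hgg] }
  refine ⟨K, rfl, ⟨⟨⟨e, hg e he⟩⟩, ?_, ?_⟩, ⟨g₀, hgg, fun s => s.2⟩, ?_⟩
  · rintro ⟨a, ha⟩ ⟨b, hb⟩
    obtain ⟨x, hx⟩ := hS.2.1 a b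
    have ha' : f a = g₀ := ha
    have hb' : f b = g₀ := hb
    have hfx : f x = g₀ := by
      have h1 : f a * f x = f b := by rw [← map_mul, hx]
      rwa [ha', hb', hS'.idem_mul hgg] at h1
    exact ⟨⟨x, hfx⟩, Subtype.ext hx⟩
  · intro a b c h
    exact Subtype.ext (hS.2.2 a b c (congrArg Subtype.val h))
  · intro Y _ hY lam ⟨t, _, hlam⟩
    obtain ⟨u, hu⟩ := hY.exists_idem
    have ht : t = g₀ := by
      rw [← hlam u]
      exact hg (lam u) (by rw [← map_mul, hu])
    refine ⟨⟨fun y => ⟨lam y, (hlam y).trans ht⟩, fun a b => Subtype.ext (map_mul lam a b)⟩,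
      rfl, ?_⟩
    intro m hm
    ext y
    exact (DFunLike.congr_fun hm y).symm

/-- Lemma: a semigroup morphism `f : S → S'` between right groups has a Z-prekernel in
the category of right groups if and only if `f(E(S))` is a singleton. Moreover, if
`f(E(S)) = {g₀}`, then `K := f⁻¹({g₀})` is a subsemigroup of `S` which is itself a right
group, and the inclusion `K → S` is a Z-prekernel of `f`. -/
theorem stmt_17 {S S' : Type} [Semigroup S] [Semigroup S']
    (hS : IsRightGroup S) (hS' : IsRightGroup S') (f : S →ₙ* S') :
    ((∃ (L : Type) (_ : Semigroup L), IsRightGroup L ∧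
        ∃ j : L →ₙ* S, IsZPrekernel f j) ↔
      ∃ g₀ : S', ∀ e : S, e * e = e → f e = g₀) ∧
    (∀ g₀ : S', (∀ e : S, e * e = e → f e = g₀) →
      ∃ K : Subsemigroup S, (K : Set S) = {s : S | f s = g₀} ∧
        IsRightGroup K ∧ IsZPrekernel f (MulMemClass.subtype K)) := by
  refine ⟨⟨?_, ?_⟩, prekernel_aux hS hS' f⟩
  · rintro ⟨L, _, _, j, ⟨t, _, ht⟩, huniv⟩
    refine ⟨t, fun e he => ?_⟩
    have hU : IsRightGroup Unit := ⟨⟨()⟩, fun _ _ => ⟨(), rfl⟩, fun _ _ _ _ => rfl⟩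
    obtain ⟨m, hm, _⟩ := huniv Unit hU ⟨fun _ => e, fun _ _ => he.symm⟩
      ⟨f e, by rw [← map_mul, he], fun _ => rfl⟩
    have h : e = j (m ()) := DFunLike.congr_fun hm ()
    rw [h]
    exact ht (m ())
  · rintro ⟨g₀, hg⟩
    obtain ⟨K, _, hK, hp⟩ := prekernel_aux hS hS' f g₀ hg
    exact ⟨K, inferInstance, hK, _, hp⟩
end

section
/- The pair (right zero semigroups, groups) is a pretorsion theory in the category of right groups. Concretely: (1) every semigroup morphism from a nonempty right zero semigroup to a group is constant with value the identity of the group; (2) for every right group S, writing E := E(S), i: E → S for the inclusion and π: S → S/∼ for the canonical projection, the sequence E → S → S/∼ is short Z-preexact, where Z is the class of one-element semigroups and the Z-trivial morphisms are the constant ones: π ∘ i is constant; for every right group Y and every semigroup morphism λ: Y → S with π ∘ λ constant, there is a unique semigroup morphism λ': Y → E with λ = i ∘ λ'; and for every right group T and every semigroup morphism μ: S → T with μ ∘ i constant, there is a unique semigroup morphism μ': S/∼ → T with μ = μ' ∘ π. Here E is a right zero semigroup and S/∼ is a group. -/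
/-- Theorem: the pair (right zero semigroups, groups) is a pretorsion theory in the
category of right groups. (1) Every semigroup morphism from a nonempty right zero
semigroup to a group is constant with value the identity. (2) For every right group
`S`, with `E = E(S)`, `i : E → S` the inclusion and `π : S → S/∼` the canonical
projection (realized as any surjective semigroup morphism `π : S → Q` with kernel `∼`),
`E` is a right zero semigroup, `Q ≅ S/∼` is a group, and the sequence `E → S → Q` is
short Z-preexact: `π ∘ i` is constant, `i` is a Z-prekernel of `π`, and `π` is a
Z-precokernel of `i` (where the Z-trivial morphisms are the constant ones). -/
theorem stmt_19 :
    -- (1) morphisms from nonempty right zero semigroups to groups are Z-trivial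
    (∀ (D : Type) [Semigroup D], Nonempty D → (∀ a b : D, a * b = b) →
      ∀ (G : Type) [Group G] (φ : D →ₙ* G) (d : D), φ d = 1) ∧
    -- (2) the short Z-preexact sequence E → S → S/∼ for every right group S
    (∀ (S : Type) [Semigroup S], Nonempty S → (∀ a b : S, ∃ x : S, a * x = b) →
      (∀ a b c : S, a * b = a * c → b = c) →
      ∀ (Q : Type) [Semigroup Q] (π : S →ₙ* Q), Function.Surjective π →
      (∀ x y : S, π x = π y ↔ ∃ e : S, e * e = e ∧ x * e = y * e) →
      ∃ E : Subsemigroup S, (E : Set S) = {x : S | x * x = x} ∧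
        -- E is a right zero semigroup
        (∀ a b : E, a * b = b) ∧
        -- Q = S/∼ is a group
        (∃ qe : Q, (∀ q : Q, qe * q = q ∧ q * qe = q) ∧
          ∀ q : Q, ∃ q' : Q, q * q' = qe ∧ q' * q = qe) ∧
        -- π ∘ i is Z-trivial (constant)
        (∃ q₀ : Q, ∀ x : E, π (x : S) = q₀) ∧
        -- i is a Z-prekernel of π
        (∀ (Y : Type) [Semigroup Y], Nonempty Y → (∀ a b : Y, ∃ x : Y, a * x = b) →
          (∀ a b c : Y, a * b = a * c → b = c) →
          ∀ lam : Y →ₙ* S, (∃ q : Q, ∀ y : Y, π (lam y) = q) →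
            ∃! lam' : Y →ₙ* E, lam = (MulMemClass.subtype E).comp lam') ∧
        -- π is a Z-precokernel of i
        (∀ (T : Type) [Semigroup T], Nonempty T → (∀ a b : T, ∃ x : T, a * x = b) →
          (∀ a b c : T, a * b = a * c → b = c) →
          ∀ μ : S →ₙ* T, (∃ t : T, ∀ e : S, e * e = e → μ e = t) →
            ∃! μ' : Q →ₙ* T, μ = μ'.comp π)) := by
  refine ⟨?_, ?_⟩
  · intro D _ _ hD G _ φ d
    have h : φ d * φ d = φ d := by rw [← map_mul, hD]
    simpa using h
  intro S _ hne hrs hlc Q _ π hπ hker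
  have hid : ∀ e : S, e * e = e → ∀ b, e * b = b := by
    intro e he b
    apply hlc e
    rw [← mul_assoc, he]
  have hrid : ∀ x : S, ∃ f : S, f * f = f ∧ x * f = x := by
    intro x
    obtain ⟨f, hf⟩ := hrs x x
    refine ⟨f, ?_, hf⟩
    apply hlc x
    rw [← mul_assoc, hf, hf]
  obtain ⟨x0⟩ := hne
  obtain ⟨e0, he0, -⟩ := hrid x0
  have hl : ∀ q : Q, π e0 * q = q := by
    intro q
    obtain ⟨x, rfl⟩ := hπ q
    rw [← map_mul, hid e0 he0]
  have hr : ∀ q : Q, q * π e0 = q := by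
    intro q
    obtain ⟨x, rfl⟩ := hπ q
    rw [← map_mul, hker]
    exact ⟨e0, he0, by rw [mul_assoc, he0]⟩
  have hri : ∀ q : Q, ∃ q' : Q, q * q' = π e0 := by
    intro q
    obtain ⟨x, rfl⟩ := hπ q
    obtain ⟨y, hy⟩ := hrs x e0
    exact ⟨π y, by rw [← map_mul, hy]⟩
  have hinv : ∀ q : Q, ∃ q' : Q, q * q' = π e0 ∧ q' * q = π e0 := by
    intro q
    obtain ⟨q', h1⟩ := hri q
    obtain ⟨q'', h2⟩ := hri q'
    have h3 : q = q'' := by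
      rw [← hr q, ← h2, ← mul_assoc, h1, hl]
    exact ⟨q', h1, by rw [h3]; exact h2⟩
  have hcon : ∀ x : S, x * x = x → π x = π e0 := by
    intro x hx
    rw [hker]
    exact ⟨e0, he0, by rw [hid x hx, he0]⟩
  refine ⟨⟨{x : S | x * x = x}, ?_⟩, rfl, ?_, ⟨π e0, fun q => ⟨hl q, hr q⟩, hinv⟩,
    ⟨π e0, fun x => hcon x x.2⟩, ?_, ?_⟩
  · intro a b ha hb
    have h : a * b = b := hid a ha b
    show a * b * (a * b) = a * b
    rw [h]; exact hb
  · intro a b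
    exact Subtype.ext (hid a a.2 b)
  · intro Y _ hY _ _ lam hq
    obtain ⟨q, hq⟩ := hq
    obtain ⟨y0⟩ := hY
    have hqq : q * q = q := by
      have := hq (y0 * y0)
      rwa [map_mul, map_mul, hq] at this
    have hqe : q = π e0 := by
      obtain ⟨q', h1⟩ := hri q
      rw [← hr q, ← h1, ← mul_assoc, hqq]
    have hmem : ∀ y, lam y * lam y = lam y := by
      intro y
      obtain ⟨e, he, h⟩ := (hker (lam y) e0).1 ((hq y).trans hqe)
      rw [hid e0 he0] at h
      calc lam y * lam y = lam y * (e * lam y) := by rw [hid e he]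
        _ = lam y := by rw [← mul_assoc, h, hid e he]
    refine ⟨⟨fun y => ⟨lam y, hmem y⟩, fun a b => Subtype.ext (map_mul lam a b)⟩, ?_, ?_⟩
    · ext y; rfl
    · intro l' hl'
      ext y
      exact (DFunLike.congr_fun hl' y).symm
  · intro T _ _ _ _ μ ht
    obtain ⟨t, ht⟩ := ht
    have hmt : ∀ x, ∀ e, e * e = e → μ (x * e) = μ x := by
      intro x e he
      obtain ⟨f, hf, hxf⟩ := hrid x
      rw [map_mul, ht e he, ← ht f hf, ← map_mul, hxf]
    have hwd : ∀ x y, π x = π y → μ x = μ y := by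
      intro x y h
      obtain ⟨e, he, h⟩ := (hker x y).1 h
      rw [← hmt x e he, h, hmt y e he]
    choose s hs using hπ
    refine ⟨⟨fun q => μ (s q), fun a b => ?_⟩, ?_, ?_⟩
    · rw [← map_mul]
      apply hwd
      rw [map_mul, hs, hs, hs]
    · ext x
      exact hwd _ _ (hs _).symm
    · intro m hm
      ext q
      have := DFunLike.congr_fun hm (s q)
      simp only [MulHom.comp_apply, hs] at this
      exact this.symm
end
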